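/- Let G be a finite graph, let k be a nonnegative integer, and let S ⊆ V(G) be such that every connected component D of G − S satisfies |N_G(D)| ≤ k. Let H be the torso of S in G. Suppose (A′,B′) is a solution such that A′ \ B′ is inclusion-wise minimal among all solutions, i.e., there is no solution (A,B) with A \ B ⊊ A′ \ B′. Then H[(A′ \ B′) ∩ S] is connected and every connected component of G[A′ \ B′] contains a vertex of S. -/

import Mathlib

/-- A separation of a graph `G`. -/
def IsSeparation {V : Type} (G : SimpleGraph V) (A B : Set V) : Prop :=
  A ∪ B = Set.univ ∧ ∀ u v : V, G.Adj u v → u ∈ A \ B → v ∉ B \ A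

/-- A solution (w.r.t. `G`, `k`, `S`): a separation `(A,B)` of order `ℓ ≤ k` with
`|A ∩ S| > ℓ` and `|B ∩ S| > ℓ`. -/
def IsSolution {V : Type} (G : SimpleGraph V) (k : ℕ) (S A B : Set V) : Prop :=
  IsSeparation G A B ∧ (A ∩ B).ncard ≤ k ∧
    (A ∩ B).ncard < (A ∩ S).ncard ∧ (A ∩ B).ncard < (B ∩ S).ncard

/-- `D` is a connected component of the subgraph of `G` induced by `W`. -/
def IsComponentOf {V : Type} (G : SimpleGraph V) (W D : Set V) : Prop :=
  D.Nonempty ∧ D ⊆ W ∧ (G.induce D).Connected ∧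
    ∀ u v : V, u ∈ D → v ∈ W → G.Adj u v → v ∈ D

/-- The (open) neighborhood of a vertex set `X` in `G`. -/
def nbhd {V : Type} (G : SimpleGraph V) (X : Set V) : Set V :=
  {v | v ∉ X ∧ ∃ u ∈ X, G.Adj u v}

/-- The torso of `S` in `G`. -/
def torso {V : Type} (G : SimpleGraph V) (S : Set V) : SimpleGraph V where
  Adj u v := u ≠ v ∧ u ∈ S ∧ v ∈ S ∧
    (G.Adj u v ∨ ∃ D : Set V, IsComponentOf G Sᶜ D ∧ u ∈ nbhd G D ∧ v ∈ nbhd G D)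
  symm := by
    refine ⟨?_⟩
    rintro u v ⟨hne, hu, hv, h | ⟨D, hD, h1, h2⟩⟩
    · exact ⟨hne.symm, hv, hu, Or.inl h.symm⟩
    · exact ⟨hne.symm, hv, hu, Or.inr ⟨D, hD, h2, h1⟩⟩
  loopless := ⟨fun u h => h.1 rfl⟩

lemma exists_comp {V : Type} (G : SimpleGraph V) (W : Set V) (x : V) (hx : x ∈ W) :
    ∃ D, IsComponentOf G W D ∧ x ∈ D := by
  let D : Set V := {y | ∃ h : y ∈ W, (G.induce W).Reachable ⟨x, hx⟩ ⟨y, h⟩}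
  have hxD : x ∈ D := ⟨hx, SimpleGraph.Reachable.refl _⟩
  have key : ∀ y : W, (G.induce W).Reachable ⟨x, hx⟩ y →
      ∃ h : y.1 ∈ D, (G.induce D).Reachable ⟨x, hxD⟩ ⟨y.1, h⟩ := by
    intro y hy
    rw [SimpleGraph.reachable_iff_reflTransGen] at hy
    induction hy with
    | refl => exact ⟨hxD, SimpleGraph.Reachable.refl _⟩
    | tail hab hbc ih =>
      rename_i b c
      obtain ⟨hb, hr⟩ := ih
      have hc : c.1 ∈ D := by
        refine ⟨c.2, ?_⟩
        obtain ⟨h, h2⟩ := hb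
        exact h2.trans (SimpleGraph.Adj.reachable hbc)
      refine ⟨hc, hr.trans (SimpleGraph.Adj.reachable ?_)⟩
      exact hbc
  refine ⟨D, ⟨⟨x, hxD⟩, fun y hy => hy.1, ?_, ?_⟩, hxD⟩
  · rw [SimpleGraph.connected_iff_exists_forall_reachable]
    refine ⟨⟨x, hxD⟩, ?_⟩
    rintro ⟨y, hy⟩
    obtain ⟨h, h2⟩ := hy
    exact (key ⟨y, h⟩ h2).2
  · rintro u v ⟨hu, hur⟩ hv huv
    refine ⟨hv, hur.trans (SimpleGraph.Adj.reachable ?_)⟩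
    exact huv

lemma comp_subset {V : Type} {G : SimpleGraph V} {W D E : Set V} {x : V}
    (hD : IsComponentOf G W D) (hE : IsComponentOf G W E) (hxD : x ∈ D) (hxE : x ∈ E) :
    D ⊆ E := by
  intro y hy
  have h := hD.2.2.1.preconnected ⟨x, hxD⟩ ⟨y, hy⟩
  rw [SimpleGraph.reachable_iff_reflTransGen] at h
  have key : ∀ z : D, Relation.ReflTransGen (G.induce D).Adj ⟨x, hxD⟩ z → z.1 ∈ E := by
    intro z hz
    induction hz with
    | refl => exact hxE
    | tail hab hbc ih =>
      rename_i b c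
      exact hE.2.2.2 b.1 c.1 ih (hD.2.1 c.2) hbc
  exact key _ h

/-- Non-terminals whose component attaches to `P`. -/
def touch {V : Type} (G : SimpleGraph V) (S P : Set V) : Set V :=
  {x | ∃ D, IsComponentOf G Sᶜ D ∧ x ∈ D ∧ ∃ p ∈ P, p ∈ nbhd G D}

lemma side_bound {V : Type} [Fintype V] (G : SimpleGraph V) (k : ℕ)
    (S A' B' : Set V) (hsol : IsSolution G k S A' B')
    (hmin : ∀ A B : Set V, IsSolution G k S A B → ¬ (A \ B ⊂ A' \ B'))
    (P : Set V) (hP : P ⊆ (A' \ B') ∩ S)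
    (hne : ∃ q ∈ (A' \ B') ∩ S, q ∉ P)
    (hcl : ∀ p ∈ P, ∀ q ∈ (A' \ B') ∩ S, (torso G S).Adj p q → q ∈ P) :
    P.ncard ≤ ((A' ∩ B') ∩ touch G S P).ncard := by
  by_contra hlt
  push Not at hlt
  have hTS : ∀ x ∈ touch G S P, x ∉ S := by
    rintro x ⟨D, hD, hx, -⟩; exact hD.2.1 hx
  obtain ⟨⟨hun, hsep⟩, hk, hA, hB⟩ := hsol
  have hcov : ∀ v, v ∈ A' ∨ v ∈ B' := fun v => by
    have : v ∈ A' ∪ B' := hun ▸ Set.mem_univ v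
    exact this
  set T := touch G S P with hT
  set X1 : Set V := P ∪ ((A' \ B') ∩ T) with hX1
  set Z1 : Set V := ((A' ∩ B') ∩ S) ∪ ((A' ∩ B') ∩ T) with hZ1
  have hXsub : X1 ⊆ A' \ B' := by
    rintro x (hx | hx)
    · exact (hP hx).1
    · exact hx.1
  have hZsub : Z1 ⊆ A' ∩ B' := by
    rintro x (hx | hx) <;> exact hx.1
  have hcap : (X1 ∪ Z1) ∩ X1ᶜ = Z1 := by
    clear hcl hne hsep hmin hcov
    clear_value X1 Z1
    clear hX1 hZ1
    ext v
    have h1 := @hXsub v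
    have h2 := @hZsub v
    simp only [Set.mem_inter_iff, Set.mem_union, Set.mem_compl_iff, Set.mem_sdiff] at *
    tauto
  have hdiff : (X1 ∪ Z1) \ X1ᶜ = X1 := by
    clear_value X1 Z1
    clear hX1 hZ1
    ext v; simp only [Set.mem_sdiff, Set.mem_union, Set.mem_compl_iff]; tauto
  have hZc : Z1.ncard = ((A' ∩ B') ∩ S).ncard + ((A' ∩ B') ∩ T).ncard := by
    apply Set.ncard_union_eq _ (Set.toFinite _) (Set.toFinite _)
    rw [Set.disjoint_left]
    intro x hx hx'
    exact hTS x hx'.2 hx.2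
  have hZle : Z1.ncard ≤ (A' ∩ B').ncard := Set.ncard_le_ncard hZsub (Set.toFinite _)
  refine hmin (X1 ∪ Z1) X1ᶜ ⟨⟨?_, ?_⟩, ?_, ?_, ?_⟩ ?_
  · ext v; simp only [Set.mem_union, Set.mem_compl_iff, Set.mem_univ, iff_true]; tauto
  · rintro u v huv ⟨-, hu⟩ ⟨hv1, hv2⟩
    have hu : u ∈ X1 := not_not.mp hu
    apply hv2
    have hvA : v ∈ A' := by
      by_contra hvA
      exact hsep u v huv (hXsub hu) ⟨(hcov v).resolve_left hvA, hvA⟩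
    by_cases hvS : v ∈ S
    · by_cases hvB : v ∈ B'
      · exact Or.inr (Or.inl ⟨⟨hvA, hvB⟩, hvS⟩)
      · left; left
        rcases hu with hu | ⟨-, D, hD, huD, p, hp, hpD⟩
        · exact hcl u hu v ⟨⟨hvA, hvB⟩, hvS⟩ ⟨huv.ne, (hP hu).2, hvS, Or.inl huv⟩
        · by_cases hpv : p = v
          · exact hpv ▸ hp
          · exact hcl p hp v ⟨⟨hvA, hvB⟩, hvS⟩ ⟨hpv, (hP hp).2, hvS,
              Or.inr ⟨D, hD, hpD, fun h => hD.2.1 h hvS, u, huD, huv⟩⟩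
    · have hvT : v ∈ T := by
        rcases hu with hu | ⟨-, D, hD, huD, p, hp, hpD⟩
        · obtain ⟨D, hD, hvD⟩ := exists_comp G Sᶜ v hvS
          exact ⟨D, hD, hvD, u, hu, fun h => hD.2.1 h (hP hu).2, v, hvD, huv.symm⟩
        · exact ⟨D, hD, hD.2.2.2 u v huD hvS huv, p, hp, hpD⟩
      by_cases hvB : v ∈ B'
      · exact Or.inr (Or.inr ⟨⟨hvA, hvB⟩, hvT⟩)
      · exact Or.inl (Or.inr ⟨⟨hvA, hvB⟩, hvT⟩)
  · rw [hcap]; omega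
  · rw [hcap, hZc]
    have h1 : (P ∪ ((A' ∩ B') ∩ S)).ncard = P.ncard + ((A' ∩ B') ∩ S).ncard := by
      apply Set.ncard_union_eq _ (Set.toFinite _) (Set.toFinite _)
      rw [Set.disjoint_left]
      intro x hx hx'
      exact (hP hx).1.2 hx'.1.2
    have h2 : (P ∪ ((A' ∩ B') ∩ S)).ncard ≤ ((X1 ∪ Z1) ∩ S).ncard := by
      apply Set.ncard_le_ncard _ (Set.toFinite _)
      rintro x (hx | hx)
      · exact ⟨Or.inl (Or.inl hx), (hP hx).2⟩
      · exact ⟨Or.inr (Or.inl hx), hx.2⟩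
    omega
  · rw [hcap]
    have : (B' ∩ S).ncard ≤ (X1ᶜ ∩ S).ncard := by
      apply Set.ncard_le_ncard _ (Set.toFinite _)
      rintro x ⟨hx, hxS⟩
      exact ⟨fun h => (hXsub h).2 hx, hxS⟩
    omega
  · rw [hdiff]
    obtain ⟨q, hq, hqP⟩ := hne
    refine ⟨hXsub, fun h => ?_⟩
    rcases h hq.1 with h | h
    · exact hqP h
    · exact hTS q h.2 hq.2

/-- if every component of `G − S` has at most `k` attachment vertices
and `(A′,B′)` is a solution with inclusion-wise minimal `A′ \ B′` among all
solutions, then `H[(A′ \ B′) ∩ S]` is connected (`H` the torso of `S`) and every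
connected component of `G[A′ \ B′]` contains a vertex of `S`. -/
theorem minimal_solution_connected
    {V : Type} [Fintype V] (G : SimpleGraph V) (k : ℕ)
    (S : Set V) (hS : ∀ D : Set V, IsComponentOf G Sᶜ D → (nbhd G D).ncard ≤ k)
    (A' B' : Set V) (hsol : IsSolution G k S A' B')
    (hmin : ∀ A B : Set V, IsSolution G k S A B → ¬ (A \ B ⊂ A' \ B')) :
    ((torso G S).induce ((A' \ B') ∩ S)).Connected ∧
      ∀ D : Set V, IsComponentOf G (A' \ B') D → (D ∩ S).Nonempty := by
  have hsol0 := hsol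
  obtain ⟨⟨hun, hsep⟩, hk, hA, hB⟩ := hsol
  have hcov : ∀ v, v ∈ A' ∨ v ∈ B' := fun v => by
    have : v ∈ A' ∪ B' := hun ▸ Set.mem_univ v
    exact this
  have hAS : (A' ∩ S).ncard = ((A' \ B') ∩ S).ncard + ((A' ∩ B') ∩ S).ncard := by
    rw [← Set.ncard_union_eq _ (Set.toFinite _) (Set.toFinite _)]
    · congr 1; ext v
      simp only [Set.mem_inter_iff, Set.mem_union, Set.mem_sdiff]; tauto
    · rw [Set.disjoint_left]
      intro x hx hx'
      exact hx.1.2 hx'.1.2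
  have hZS : (A' ∩ B').ncard = ((A' ∩ B') ∩ S).ncard + ((A' ∩ B') \ S).ncard :=
    (Set.ncard_inter_add_ncard_sdiff_eq_ncard _ _ (Set.toFinite _)).symm
  constructor
  · have hne : Nonempty ↥((A' \ B') ∩ S) := by
      rw [Set.nonempty_coe_sort, ← Set.ncard_pos (Set.toFinite _)]
      omega
    refine { preconnected := ?_, nonempty := hne }
    intro a b
    by_contra hab
    let H := (torso G S).induce ((A' \ B') ∩ S)
    let P : Set V := {y | ∃ h : y ∈ (A' \ B') ∩ S, H.Reachable a ⟨y, h⟩}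
    let Q : Set V := ((A' \ B') ∩ S) \ P
    have hPs : P ⊆ (A' \ B') ∩ S := fun y hy => hy.1
    have haP : a.1 ∈ P := ⟨a.2, SimpleGraph.Reachable.refl _⟩
    have hbP : b.1 ∉ P := fun h => hab h.2
    have hcl : ∀ p ∈ P, ∀ q ∈ (A' \ B') ∩ S, (torso G S).Adj p q → q ∈ P := by
      rintro p ⟨hp, hpr⟩ q hq hpq
      refine ⟨hq, hpr.trans (SimpleGraph.Adj.reachable ?_)⟩
      exact hpq
    have h1 := side_bound G k S A' B' hsol0 hmin P hPs ⟨b.1, b.2, hbP⟩ hcl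
    have h2 := side_bound G k S A' B' hsol0 hmin Q Set.sdiff_subset
      ⟨a.1, a.2, fun h => h.2 haP⟩
      (fun p hp q hq hpq => ⟨hq, fun hqP => hp.2 (hcl q hqP p hp.1 hpq.symm)⟩)
    have hPQ : Q.ncard + P.ncard = ((A' \ B') ∩ S).ncard :=
      Set.ncard_sdiff_add_ncard_of_subset hPs (Set.toFinite _)
    have h3 : ((A' ∩ B') ∩ touch G S P).ncard + ((A' ∩ B') ∩ touch G S Q).ncard
        ≤ ((A' ∩ B') \ S).ncard := by
      rw [← Set.ncard_union_eq _ (Set.toFinite _) (Set.toFinite _)]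
      · apply Set.ncard_le_ncard _ (Set.toFinite _)
        rintro x (⟨hx, D, hD, hxD, -⟩ | ⟨hx, D, hD, hxD, -⟩) <;> exact ⟨hx, hD.2.1 hxD⟩
      · rw [Set.disjoint_left]
        rintro x ⟨-, D, hD, hxD, p, hp, hpD⟩ ⟨-, E, hE, hxE, q, hq, hqE⟩
        have hDE : D = E := (comp_subset hD hE hxD hxE).antisymm (comp_subset hE hD hxE hxD)
        subst hDE
        refine hq.2 (hcl p hp q hq.1 ⟨?_, (hPs hp).2, hq.1.2, Or.inr ⟨D, hD, hpD, hqE⟩⟩)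
        rintro rfl
        exact hq.2 hp
    omega
  · intro D hD
    by_contra hDS
    have hDS : ∀ x ∈ D, x ∉ S := fun x hx hxS => hDS ⟨x, hx, hxS⟩
    have hDX := hD.2.1
    have hcap : (A' \ D) ∩ (B' ∪ D) = A' ∩ B' := by
      ext v
      have := @hDX v
      simp only [Set.mem_inter_iff, Set.mem_union, Set.mem_sdiff] at *
      tauto
    refine hmin (A' \ D) (B' ∪ D) ⟨⟨?_, ?_⟩, ?_, ?_, ?_⟩ ?_
    · ext v
      have := hcov v
      simp only [Set.mem_union, Set.mem_sdiff, Set.mem_univ, iff_true]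
      tauto
    · rintro u v huv ⟨⟨huA, huD⟩, hu⟩ ⟨hv1, hv2⟩
      have huB : u ∉ B' := fun h => hu (Or.inl h)
      by_cases hvD : v ∈ D
      · exact huD (hD.2.2.2 v u hvD ⟨huA, huB⟩ huv.symm)
      · exact hsep u v huv ⟨huA, huB⟩ ⟨hv1.resolve_right hvD, fun h => hv2 ⟨h, hvD⟩⟩
    · rw [hcap]; exact hk
    · rw [hcap]
      have : (A' \ D) ∩ S = A' ∩ S := by
        ext v
        have := hDS v
        simp only [Set.mem_inter_iff, Set.mem_sdiff]
        tauto
      rw [this]; exact hA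
    · rw [hcap]
      refine hB.trans_le (Set.ncard_le_ncard ?_ (Set.toFinite _))
      exact Set.inter_subset_inter_left _ Set.subset_union_left
    · obtain ⟨d, hd⟩ := hD.1
      refine ⟨fun x hx => ⟨hx.1.1, fun h => hx.2 (Or.inl h)⟩, fun h => ?_⟩
      exact (h (hDX hd)).1.2 hd
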